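/- Let 1 ≤ p < ∞ and -1 < α < ∞. No linear subspace M of the weighted Bergman space A^p_α(𝔻) that is closed in the A^p_α norm and invariant under the shift operator (z·M ⊆ M) can have the form M = φ·H^p(𝔻) = { φ·h : h ∈ H^p(𝔻) } for an inner function φ. -/

import Mathlib

/-!
The inclusion `H^p ⊂ A^p_α` is proper, and multiplication by a bounded function `φ ≢ 0` preserves
this. The witness is `k(z) = (1 - z)^(-1/p)`, with `|k(z)|^p = 1/|1 - z|`.

* `k ∉ H^p`, since the circle means of `1/|1 - z|` grow at least like `log (1/(1-r))`
  (`not_memHardy_kern_zero`).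
* `k ∈ A^p_α`: in polar coordinates `|1 - z|` is bounded below both by `1 - r` and by `|θ|/π`, so
  for small `δ > 0` the Bergman integrand is at most a constant times
  `(1-r)^(α-δ) |θ|^(δ-1)`, which is integrable (`integrableOn_inv_mul_weight`).
* The functions `k_ε(z) = (1 + ε - z)^(-1/p)` are bounded, hence in `H^p`, satisfy `|k_ε| ≤ |k|`,
  and converge pointwise to `k` as `ε → 0`.

If `M = φ H^p` were closed in `A^p_α`, dominated convergence would give `φ k_ε → φ k` in `A^p_α`,
so `φ k = φ h` with `h ∈ H^p`. An inner function is not identically zero, so `h = k` by the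
identity theorem, a contradiction.
-/


open MeasureTheory Filter Set Topology Real

noncomputable section

/-- The open unit disk in the complex plane. -/
def unitDisk : Set ℂ := Metric.ball 0 1

/-- The integrand `|f z|^p (1 - |z|^2)^α` appearing in the weighted Bergman norm. -/
def bergmanIntegrand (p α : ℝ) (f : ℂ → ℂ) (z : ℂ) : ℝ :=
  ‖f z‖ ^ p * (1 - ‖z‖ ^ 2) ^ α

/-- Membership in the weighted Bergman space `A^p_α(𝔻)`. -/
def MemBergman (p α : ℝ) (f : ℂ → ℂ) : Prop :=
  DifferentiableOn ℂ f unitDisk ∧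
    IntegrableOn (bergmanIntegrand p α f) unitDisk volume

/-- The weighted Bergman norm `‖f‖_{A^p_α}`. -/
def bergmanNorm (p α : ℝ) (f : ℂ → ℂ) : ℝ :=
  (((α + 1) / π) * ∫ z in unitDisk, bergmanIntegrand p α f z ∂volume) ^ (1 / p)

/-- The mean `(1/(2π)) ∫_0^{2π} |f(r e^{iθ})|^p dθ`. -/
def hardyIntegral (p : ℝ) (f : ℂ → ℂ) (r : ℝ) : ℝ :=
  (1 / (2 * π)) * ∫ θ in (0:ℝ)..(2 * π), ‖f ((r : ℂ) * Complex.exp (θ * Complex.I))‖ ^ p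

/-- Membership in the Hardy space `H^p(𝔻)`. -/
def MemHardy (p : ℝ) (f : ℂ → ℂ) : Prop :=
  DifferentiableOn ℂ f unitDisk ∧
    ∃ C : ℝ, ∀ r : ℝ, 0 ≤ r → r < 1 → hardyIntegral p f r ≤ C

/-- The Hardy norm `‖f‖_{H^p}`. -/
def hardyNorm (p : ℝ) (f : ℂ → ℂ) : ℝ :=
  ⨆ r : Set.Ico (0:ℝ) 1, (hardyIntegral p f ↑r) ^ (1 / p)

/-- `f` has the radial limit `L` at the boundary point `e^{iθ}`. -/
def HasRadialLimit (f : ℂ → ℂ) (θ : ℝ) (L : ℂ) : Prop :=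
  Tendsto (fun r : ℝ => f ((r : ℂ) * Complex.exp (θ * Complex.I))) (𝓝[<] (1:ℝ)) (𝓝 L)

/-- `φ` is an inner function: bounded analytic on the disk, with radial limits of
modulus one at almost every boundary point. -/
def IsInner (φ : ℂ → ℂ) : Prop :=
  DifferentiableOn ℂ φ unitDisk ∧ (∃ C : ℝ, ∀ z ∈ unitDisk, ‖φ z‖ ≤ C) ∧
    ∀ᵐ θ ∂(volume.restrict (Set.Ico (0:ℝ) (2 * π))),
      ∃ L : ℂ, ‖L‖ = 1 ∧ HasRadialLimit φ θ L

/-- `g` belongs to `φ · H^p(𝔻)` (as a space of analytic functions on the disk). -/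
def MemMulHardy (p : ℝ) (φ g : ℂ → ℂ) : Prop :=
  ∃ h : ℂ → ℂ, MemHardy p h ∧ Set.EqOn g (fun z => φ z * h z) unitDisk

/-- The lacunary series `f₀(z) = ∑_{k=1}^∞ z^{3^{k-1}}`. -/
def lacunary (z : ℂ) : ℂ := ∑' k : ℕ, z ^ (3 ^ k)


/-! ### The kernels `(1 + ε - z)^(-1/p)` -/

/-- The function `(1 + ε - z)^(-1/p)`. For `ε > 0` it is bounded on the disk; for `ε = 0` its
`p`-th power has modulus `1/|1-z|`, which is area-integrable against the Bergman weight but has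
unbounded circle means. -/
def kern (p ε : ℝ) (z : ℂ) : ℂ := (1 + (ε : ℂ) - z) ^ ((-(1 / p) : ℝ) : ℂ)

lemma mem_unitDisk {z : ℂ} : z ∈ unitDisk ↔ ‖z‖ < 1 := by simp [unitDisk]

lemma re_pos_of_mem {ε : ℝ} (hε : 0 ≤ ε) {z : ℂ} (hz : z ∈ unitDisk) :
    0 < (1 + (ε : ℂ) - z).re := by
  have h1 := mem_unitDisk.1 hz
  have h2 := Complex.re_le_norm z
  simp
  linarith

lemma norm_kern_rpow {p : ℝ} (hp : 1 ≤ p) (ε : ℝ) (z : ℂ) :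
    ‖kern p ε z‖ ^ p = ‖1 + (ε : ℂ) - z‖⁻¹ := by
  have hp0 : p ≠ 0 := by positivity
  rw [kern, Complex.norm_cpow_real, ← Real.rpow_mul (norm_nonneg _)]
  rw [show -(1 / p) * p = -1 by field_simp, Real.rpow_neg_one]

lemma differentiableOn_kern (p : ℝ) {ε : ℝ} (hε : 0 ≤ ε) :
    DifferentiableOn ℂ (kern p ε) unitDisk := by
  intro z hz
  apply DifferentiableAt.differentiableWithinAt
  unfold kern
  apply DifferentiableAt.cpow_const (by fun_prop)
  exact Or.inl (re_pos_of_mem hε hz)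

lemma norm_one_sub_le {ε : ℝ} (hε : 0 ≤ ε) {z : ℂ} (hz : z ∈ unitDisk) :
    ‖1 - z‖ ≤ ‖1 + (ε : ℂ) - z‖ := by
  have h0 : 0 < (1 - z).re := by simpa using re_pos_of_mem le_rfl hz
  rw [Complex.norm_def, Complex.norm_def]
  apply Real.sqrt_le_sqrt
  rw [Complex.normSq_apply, Complex.normSq_apply]
  simp at h0 ⊢
  nlinarith

lemma norm_kern_le {p : ℝ} (hp : 1 ≤ p) {ε : ℝ} (hε : 0 ≤ ε) {z : ℂ} (hz : z ∈ unitDisk) :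
    ‖kern p ε z‖ ≤ ‖kern p 0 z‖ := by
  have hp0 : 0 < p := by positivity
  have h0 : 0 < ‖1 - z‖ := by
    rw [norm_pos_iff]
    intro h
    have := re_pos_of_mem le_rfl hz
    simp [h] at this
  rw [← Real.rpow_le_rpow_iff (norm_nonneg _) (norm_nonneg _) hp0, norm_kern_rpow hp,
    norm_kern_rpow hp]
  simpa using inv_anti₀ h0 (norm_one_sub_le hε hz)

/-! ### Membership in the Hardy space -/

lemma memHardy_kern {p : ℝ} (hp : 1 ≤ p) {ε : ℝ} (hε : 0 < ε) : MemHardy p (kern p ε) := by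
  refine ⟨differentiableOn_kern p hε.le, 1 / (2 * π) * (ε⁻¹ * |2 * π - 0|), ?_⟩
  intro r hr0 hr1
  unfold hardyIntegral
  gcongr
  refine (le_abs_self _).trans ?_
  rw [← Real.norm_eq_abs]
  apply intervalIntegral.norm_integral_le_of_norm_le_const
  intro θ _
  rw [norm_kern_rpow hp, norm_inv, norm_norm]
  apply inv_anti₀ hε
  refine le_trans ?_ (Complex.re_le_norm _)
  have h : ‖(r : ℂ) * Complex.exp (θ * Complex.I)‖ < 1 := by
    rw [norm_mul, Complex.norm_exp_ofReal_mul_I]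
    simpa [abs_of_nonneg hr0] using hr1
  have := (Complex.re_le_norm ((r : ℂ) * Complex.exp (θ * Complex.I))).trans h.le
  rw [Complex.sub_re, Complex.add_re, Complex.one_re, Complex.ofReal_re]
  linarith

/-- The circle means of `1/|1-z|` dominate `log (1/(1-r))` up to a constant. -/
lemma log_le_hardyIntegral {p : ℝ} (hp : 1 ≤ p) {r : ℝ} (hr0 : 0 ≤ r) (hr1 : r < 1) :
    Real.log (1 / (1 - r)) ≤ 2 * π * hardyIntegral p (kern p 0) r := by
  have hz (θ : ℝ) : (r : ℂ) * Complex.exp (θ * Complex.I) ∈ unitDisk := by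
    rw [mem_unitDisk, norm_mul, Complex.norm_exp_ofReal_mul_I]
    simpa [abs_of_nonneg hr0] using hr1
  have hpos (θ : ℝ) : 0 < ‖1 - (r : ℂ) * Complex.exp (θ * Complex.I)‖ := by
    rw [norm_pos_iff]
    intro h
    have := re_pos_of_mem le_rfl (hz θ)
    rw [Complex.ofReal_zero, add_zero, h] at this
    simp at this
  have hcont : Continuous fun θ : ℝ => ‖1 - (r : ℂ) * Complex.exp (θ * Complex.I)‖⁻¹ :=
    Continuous.inv₀ (by fun_prop) fun θ => (hpos θ).ne'
  have h2 : ∀ θ ∈ Icc (0:ℝ) 1, ((1 - r) + θ)⁻¹ ≤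
      ‖1 - (r : ℂ) * Complex.exp (θ * Complex.I)‖⁻¹ := by
    intro θ hθ
    apply inv_anti₀ (hpos θ)
    have e : 1 - (r : ℂ) * Complex.exp (θ * Complex.I) =
        ((1 - r : ℝ) : ℂ) - r * (Complex.exp (Complex.I * θ) - 1) := by
      rw [mul_comm Complex.I]; push_cast; ring
    rw [e]
    refine (norm_sub_le _ _).trans ?_
    have h3 := Real.norm_exp_I_mul_ofReal_sub_one_le (x := θ)
    rw [norm_mul, Complex.norm_real, Complex.norm_real, Real.norm_of_nonneg hr0,
      Real.norm_of_nonneg (by linarith)]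
    rw [Real.norm_of_nonneg hθ.1] at h3
    have := mul_le_mul hr1.le h3 (norm_nonneg _) zero_le_one
    linarith
  have hcont2 : ContinuousOn (fun θ : ℝ => ((1 - r) + θ)⁻¹) (Icc 0 1) := by
    apply ContinuousOn.inv₀ (by fun_prop)
    intro θ hθ
    have := hθ.1
    have : 0 < (1 - r) + θ := by linarith
    exact this.ne'
  have h4 : ∫ θ in (0:ℝ)..1, ((1 - r) + θ)⁻¹ = Real.log ((1 - r + 1) / (1 - r + 0)) := by
    rw [intervalIntegral.integral_comp_add_left (fun x : ℝ => x⁻¹), integral_inv_of_pos] <;>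
      linarith
  have h5 : ∫ θ in (0:ℝ)..1, ((1 - r) + θ)⁻¹ ≤
      ∫ θ in (0:ℝ)..1, ‖1 - (r : ℂ) * Complex.exp (θ * Complex.I)‖⁻¹ := by
    apply intervalIntegral.integral_mono_on zero_le_one _ (hcont.intervalIntegrable _ _) h2
    exact hcont2.intervalIntegrable_of_Icc zero_le_one
  have h6 : ∫ θ in (0:ℝ)..1, ‖1 - (r : ℂ) * Complex.exp (θ * Complex.I)‖⁻¹ ≤
      ∫ θ in (0:ℝ)..(2 * π), ‖1 - (r : ℂ) * Complex.exp (θ * Complex.I)‖⁻¹ := by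
    apply intervalIntegral.integral_mono_interval le_rfl zero_le_one
    · linarith [Real.pi_gt_three]
    · exact Eventually.of_forall fun θ => (inv_pos.2 (hpos θ)).le
    · exact hcont.intervalIntegrable _ _
  have h7 : 2 * π * hardyIntegral p (kern p 0) r =
      ∫ θ in (0:ℝ)..(2 * π), ‖1 - (r : ℂ) * Complex.exp (θ * Complex.I)‖⁻¹ := by
    unfold hardyIntegral
    simp_rw [norm_kern_rpow hp, Complex.ofReal_zero, add_zero]
    rw [← mul_assoc, mul_one_div_cancel (by positivity), one_mul]
  rw [h7]
  refine le_trans ?_ (h5.trans h6)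
  rw [h4, add_zero]
  have : 0 < 1 - r := by linarith
  apply Real.log_le_log (by positivity)
  gcongr
  linarith

lemma not_memHardy_kern_zero {p : ℝ} (hp : 1 ≤ p) : ¬ MemHardy p (kern p 0) := by
  rintro ⟨-, C, hC⟩
  -- this radius makes `log (1/(1-r))` equal to `2π|C| + 1`
  set r : ℝ := 1 - Real.exp (-(2 * π * |C| + 1)) with hr
  have he : Real.exp (-(2 * π * |C| + 1)) ≤ 1 := by
    rw [Real.exp_le_one_iff]
    have : 0 ≤ 2 * π * |C| := by positivity
    linarith
  have he0 := Real.exp_pos (-(2 * π * |C| + 1))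
  have h1 := log_le_hardyIntegral hp (r := r) (by linarith) (by linarith)
  have h2 := hC r (by linarith) (by linarith)
  rw [hr, sub_sub_cancel, one_div, Real.log_inv, Real.log_exp, ← hr] at h1
  have h3 : 2 * π * hardyIntegral p (kern p 0) r ≤ 2 * π * |C| := by
    gcongr
    exact h2.trans (le_abs_self C)
  linarith

lemma memHardy_congr {p : ℝ} {f g : ℂ → ℂ} (hfg : EqOn f g unitDisk) (hf : MemHardy p f) :
    MemHardy p g := by
  obtain ⟨hd, C, hC⟩ := hf
  refine ⟨hd.congr fun z hz => (hfg hz).symm, C, fun r hr0 hr1 => ?_⟩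
  convert hC r hr0 hr1 using 1
  unfold hardyIntegral
  congr 1
  apply intervalIntegral.integral_congr
  intro θ _
  have : (r : ℂ) * Complex.exp (θ * Complex.I) ∈ unitDisk := by
    rw [mem_unitDisk, norm_mul, Complex.norm_exp_ofReal_mul_I]
    simpa [abs_of_nonneg hr0] using hr1
  simp only [hfg this]

/-! ### Membership in the Bergman space -/

lemma abs_le_norm_one_sub {r θ : ℝ} (hr1 : r < 1) (hr0 : 0 < r) (hθ : |θ| ≤ π) :
    |θ| / π ≤ ‖1 - (r : ℂ) * Complex.exp (Complex.I * θ)‖ := by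
  have hn : ‖Complex.exp (Complex.I * θ)‖ = 1 := by
    rw [mul_comm, Complex.norm_exp_ofReal_mul_I]
  have h1 : 1 - r ≤ ‖1 - (r : ℂ) * Complex.exp (Complex.I * θ)‖ := by
    have := norm_sub_norm_le 1 ((r : ℂ) * Complex.exp (Complex.I * θ))
    rw [norm_mul, hn, Complex.norm_real, Real.norm_of_nonneg hr0.le] at this
    simpa using this
  have h2 : ‖Complex.exp (Complex.I * θ) - 1‖ ≤
      ‖1 - (r : ℂ) * Complex.exp (Complex.I * θ)‖ + (1 - r) := by
    have e : Complex.exp (Complex.I * θ) - 1 =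
        ((1 - r : ℝ) : ℂ) * Complex.exp (Complex.I * θ) -
          (1 - (r : ℂ) * Complex.exp (Complex.I * θ)) := by push_cast; ring
    rw [e]
    refine (norm_sub_le _ _).trans ?_
    rw [norm_mul, hn, Complex.norm_real, Real.norm_of_nonneg (by linarith)]
    linarith
  rw [Complex.norm_exp_I_mul_ofReal_sub_one, norm_mul, Real.norm_eq_abs, Real.norm_eq_abs] at h2
  have h3 := Real.mul_abs_le_abs_sin (x := θ / 2) (by
    rw [abs_div, abs_two]; linarith)
  rw [abs_div, abs_two] at h3
  rw [abs_two] at h2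
  have : 2 / π * (|θ| / 2) = |θ| / π := by ring
  linarith

lemma integrableOn_abs_rpow {s : ℝ} (hs : -1 < s) :
    IntegrableOn (fun θ : ℝ => |θ| ^ s) (Ioo (-π) π) := by
  have h1 : IntervalIntegrable (fun θ : ℝ => |θ| ^ s) volume 0 π := by
    apply (intervalIntegral.intervalIntegrable_rpow' hs).congr
    intro θ hθ
    rw [uIoc_of_le pi_pos.le] at hθ
    simp only [abs_of_pos hθ.1]
  have h2 : IntervalIntegrable (fun θ : ℝ => |θ| ^ s) volume (-π) 0 := by
    have := h1.comp_sub_left 0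
    simp only [zero_sub, abs_neg, sub_zero] at this
    exact this.symm
  rw [← intervalIntegrable_iff_integrableOn_Ioo_of_le (by linarith [pi_pos])]
  exact h2.trans h1

lemma integrableOn_one_sub_rpow {s : ℝ} (hs : -1 < s) :
    IntegrableOn (fun r : ℝ => (1 - r) ^ s) (Ioo 0 1) := by
  rw [← intervalIntegrable_iff_integrableOn_Ioo_of_le zero_le_one]
  have := (intervalIntegral.intervalIntegrable_rpow' hs (a := 0) (b := 1)).comp_sub_left 1
  simpa using this.symm

/-- Splitting `1/|1-z| = |1-z|^(-δ) |1-z|^(δ-1)` and estimating the factors by the distance to the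
circle and by the argument bounds the Bergman integrand of `kern p 0` by a product of a radial and
an angular function. -/
lemma pointwise_bound {α δ r θ : ℝ} (hδ0 : 0 < δ) (hδ1 : δ < 1) (hr0 : 0 < r) (hr1 : r < 1)
    (hθ : |θ| ≤ π) (hθ0 : θ ≠ 0) :
    r * (‖1 - (r : ℂ) * Complex.exp (Complex.I * θ)‖⁻¹ * (1 - r ^ 2) ^ α) ≤
      (2 ^ |α| * (1 - r) ^ (α - δ)) * (π ^ (1 - δ) * |θ| ^ (δ - 1)) := by
  have hn : ‖Complex.exp (Complex.I * θ)‖ = 1 := by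
    rw [mul_comm, Complex.norm_exp_ofReal_mul_I]
  have h1 : 1 - r ≤ ‖1 - (r : ℂ) * Complex.exp (Complex.I * θ)‖ := by
    have := norm_sub_norm_le 1 ((r : ℂ) * Complex.exp (Complex.I * θ))
    rw [norm_mul, hn, Complex.norm_real, Real.norm_of_nonneg hr0.le] at this
    simpa using this
  have h2 := abs_le_norm_one_sub hr1 hr0 hθ
  set N := ‖1 - (r : ℂ) * Complex.exp (Complex.I * θ)‖
  have hr : 0 < 1 - r := by linarith
  have hN : 0 < N := hr.trans_le h1
  have hθp : 0 < |θ| := abs_pos.2 hθ0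
  have e1 : N⁻¹ = N ^ (-δ) * N ^ (δ - 1) := by
    rw [← Real.rpow_add hN, ← Real.rpow_neg_one]; ring_nf
  have e2 : N ^ (-δ) ≤ (1 - r) ^ (-δ) := Real.rpow_le_rpow_of_nonpos hr h1 (by linarith)
  have e3 : N ^ (δ - 1) ≤ (|θ| / π) ^ (δ - 1) :=
    Real.rpow_le_rpow_of_nonpos (by positivity) h2 (by linarith)
  have e4 : (|θ| / π) ^ (δ - 1) = π ^ (1 - δ) * |θ| ^ (δ - 1) := by
    rw [Real.div_rpow hθp.le pi_pos.le, show 1 - δ = -(δ - 1) by ring, Real.rpow_neg pi_pos.le]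
    field_simp
  have e5 : (1 - r ^ 2) ^ α ≤ 2 ^ |α| * (1 - r) ^ α := by
    rw [show 1 - r ^ 2 = (1 + r) * (1 - r) by ring, Real.mul_rpow (by linarith) hr.le]
    gcongr
    exact (Real.rpow_le_rpow_of_exponent_le (by linarith) (le_abs_self α)).trans
      (Real.rpow_le_rpow (by linarith) (by linarith) (abs_nonneg α))
  have h0 : 0 ≤ (1 - r ^ 2) ^ α := Real.rpow_nonneg (by nlinarith) _
  calc r * (N⁻¹ * (1 - r ^ 2) ^ α) ≤ N⁻¹ * (1 - r ^ 2) ^ α :=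
        mul_le_of_le_one_left (by positivity) hr1.le
    _ ≤ ((1 - r) ^ (-δ) * (π ^ (1 - δ) * |θ| ^ (δ - 1))) * (2 ^ |α| * (1 - r) ^ α) := by
        rw [e1, ← e4]
        gcongr
    _ = _ := by
        rw [show α - δ = α + -δ by ring, Real.rpow_add hr]; ring

/-- Integrability of the Bergman integrand of `kern p 0`, by polar coordinates. -/
lemma integrableOn_inv_mul_weight {α : ℝ} (hα : -1 < α) :
    IntegrableOn (fun z : ℂ => ‖1 - z‖⁻¹ * (1 - ‖z‖ ^ 2) ^ α) unitDisk volume := by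
  obtain ⟨δ, hδ0, hδ⟩ : ∃ δ : ℝ, 0 < δ ∧ δ < min 1 (α + 1) :=
    exists_between (lt_min one_pos (by linarith))
  have hδ1 : δ < 1 := hδ.trans_le (min_le_left _ _)
  have hδα : δ < α + 1 := hδ.trans_le (min_le_right _ _)
  have hmeas : MeasurableSet unitDisk := Metric.isOpen_ball.measurableSet
  have hGm : Measurable (fun z : ℂ => ‖1 - z‖⁻¹ * (1 - ‖z‖ ^ 2) ^ α) := by fun_prop
  have hG0 : ∀ z ∈ unitDisk, 0 ≤ ‖1 - z‖⁻¹ * (1 - ‖z‖ ^ 2) ^ α := by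
    intro z hz
    rw [mem_unitDisk] at hz
    have : 0 ≤ (1 - ‖z‖ ^ 2) ^ α := Real.rpow_nonneg (by nlinarith [norm_nonneg z]) _
    positivity
  set G : ℂ → ℝ := fun z => ‖1 - z‖⁻¹ * (1 - ‖z‖ ^ 2) ^ α with hG
  refine ⟨hGm.aestronglyMeasurable, ?_⟩
  rw [hasFiniteIntegral_iff_ofReal ((ae_restrict_iff' hmeas).2 (Eventually.of_forall hG0)),
    ← lintegral_indicator hmeas, ← Complex.lintegral_comp_polarCoord_symm]
  -- the radial majorant is supported on `(0,1)`
  set R : ℝ → ℝ := (Ioo (0:ℝ) 1).indicator fun r => 2 ^ |α| * (1 - r) ^ (α - δ) with hR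
  set T : ℝ → ℝ := fun θ => π ^ (1 - δ) * |θ| ^ (δ - 1) with hT
  have hRi : Integrable R (volume.restrict (Ioi 0)) := by
    apply Integrable.mono_measure _ Measure.restrict_le_self
    rw [hR, integrable_indicator_iff measurableSet_Ioo]
    exact (integrableOn_one_sub_rpow (by linarith)).const_mul _
  have hTi : Integrable T (volume.restrict (Ioo (-π) π)) :=
    (integrableOn_abs_rpow (by linarith)).const_mul _
  have hprod := hRi.mul_prod hTi
  have hres : (volume : Measure (ℝ × ℝ)).restrict polarCoord.target =
      (volume.restrict (Ioi (0:ℝ))).prod (volume.restrict (Ioo (-π) π)) := by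
    rw [Measure.prod_restrict]; rfl
  have hfin := hprod.lintegral_lt_top
  rw [← hres] at hfin
  refine lt_of_le_of_lt (lintegral_mono_ae ?_) hfin
  have hne : ∀ᵐ q : ℝ × ℝ ∂(volume.restrict polarCoord.target), q.2 ≠ 0 := by
    rw [hres]
    refine Measure.quasiMeasurePreserving_snd.ae (p := fun θ : ℝ => θ ≠ 0) ?_
    exact ae_restrict_of_ae (Measure.ae_ne volume 0)
  filter_upwards [hne, ae_restrict_mem polarCoord.open_target.measurableSet] with q hq0 hq
  obtain ⟨r, θ⟩ := q
  rw [polarCoord_target] at hq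
  obtain ⟨hr, hθ⟩ := hq
  simp only [mem_Ioi, mem_Ioo] at hr hθ
  have hz : Complex.polarCoord.symm (r, θ) = (r : ℂ) * Complex.exp (Complex.I * θ) := by
    rw [Complex.polarCoord_symm_apply, mul_comm Complex.I, Complex.exp_mul_I]
    simp
  have hnz : ‖(r : ℂ) * Complex.exp (Complex.I * θ)‖ = r := by
    rw [norm_mul, mul_comm Complex.I, Complex.norm_exp_ofReal_mul_I]
    simpa using hr.le
  rw [hz]
  by_cases hr1 : r < 1
  · rw [indicator_of_mem (by rw [mem_unitDisk, hnz]; exact hr1)]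
    rw [smul_eq_mul, ← ENNReal.ofReal_mul hr.le]
    apply ENNReal.ofReal_le_ofReal
    simp only [hR, hT, hnz]
    rw [indicator_of_mem (show r ∈ Ioo (0:ℝ) 1 from ⟨hr, hr1⟩)]
    exact pointwise_bound hδ0 hδ1 hr hr1 (abs_le.2 ⟨hθ.1.le, hθ.2.le⟩) hq0
  · rw [indicator_of_notMem (by rw [mem_unitDisk, hnz]; exact hr1)]
    simp

/-! ### Cancelling the inner factor -/

lemma IsInner.exists_ne_zero {φ : ℂ → ℂ} (hφ : IsInner φ) : ∃ z ∈ unitDisk, φ z ≠ 0 := by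
  by_contra! h
  obtain ⟨-, -, hae⟩ := hφ
  have : (ae (volume.restrict (Ico (0:ℝ) (2 * π)))).NeBot := by
    rw [ae_neBot, Ne, Measure.restrict_eq_zero]
    simp [pi_pos]
  obtain ⟨θ, L, hL, hlim⟩ := hae.exists
  have h0 : HasRadialLimit φ θ 0 := by
    unfold HasRadialLimit
    apply tendsto_const_nhds.congr'
    have : ∀ᶠ r : ℝ in 𝓝[<] (1:ℝ), r ∈ Ioo (0:ℝ) 1 := Ioo_mem_nhdsLT one_pos
    filter_upwards [this] with r hr
    refine (h _ ?_).symm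
    rw [mem_unitDisk, norm_mul, Complex.norm_exp_ofReal_mul_I]
    simpa [abs_of_pos hr.1] using hr.2
  have := tendsto_nhds_unique hlim h0
  simp [this] at hL

/-- A common factor that is not identically zero can be cancelled. -/
lemma eqOn_of_mul_eqOn {φ f g : ℂ → ℂ} (hφ : DifferentiableOn ℂ φ unitDisk)
    (hf : DifferentiableOn ℂ f unitDisk) (hg : DifferentiableOn ℂ g unitDisk)
    (h0 : ∃ z ∈ unitDisk, φ z ≠ 0)
    (h : EqOn (fun z => φ z * f z) (fun z => φ z * g z) unitDisk) : EqOn f g unitDisk := by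
  obtain ⟨z, hz, hne⟩ := h0
  have ho : IsOpen unitDisk := Metric.isOpen_ball
  refine (hf.analyticOnNhd ho).eqOn_of_preconnected_of_eventuallyEq (hg.analyticOnNhd ho)
    (convex_ball (0:ℂ) 1).isPreconnected hz ?_
  have hc : ContinuousAt φ z := (hφ.differentiableAt (ho.mem_nhds hz)).continuousAt
  filter_upwards [hc.eventually_ne hne, ho.mem_nhds hz] with w hw hwd
  exact mul_left_cancel₀ hw (h hwd)

/-! ### Convergence in the Bergman norm -/

lemma tendsto_kern (p : ℝ) {z : ℂ} (hz : z ∈ unitDisk) :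
    Tendsto (fun n : ℕ => kern p (1 / ((n : ℝ) + 1)) z) atTop (𝓝 (kern p 0 z)) := by
  have h1 : ContinuousAt (fun ε : ℝ => kern p ε z) 0 := by
    unfold kern
    apply ContinuousAt.cpow (by fun_prop) continuousAt_const
    exact Or.inl (re_pos_of_mem le_rfl hz)
  exact h1.tendsto.comp tendsto_one_div_add_atTop_nhds_zero_nat

lemma aestronglyMeasurable_bergmanIntegrand {p α : ℝ} (hp : 1 ≤ p) {f : ℂ → ℂ}
    (hf : DifferentiableOn ℂ f unitDisk) :
    AEStronglyMeasurable (bergmanIntegrand p α f) (volume.restrict unitDisk) := by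
  have hmeas : MeasurableSet unitDisk := Metric.isOpen_ball.measurableSet
  unfold bergmanIntegrand
  apply AEStronglyMeasurable.mul
  · refine ContinuousOn.aestronglyMeasurable ?_ hmeas
    exact hf.continuousOn.norm.rpow_const fun _ _ => Or.inr (by linarith)
  · exact Measurable.aestronglyMeasurable (by fun_prop)

/-- No closed shift-invariant linear subspace of the Bergman space `A^p_α(𝔻)` has the
form `φ H^p(𝔻)` for an inner function `φ`. -/
theorem bergman_invariant_subspace_ne_inner_mul_hardy
    (p α : ℝ) (hp : 1 ≤ p) (hα : -1 < α)
    (M : Set (ℂ → ℂ))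
    (hMsub : ∀ f ∈ M, MemBergman p α f)
    (hM0 : (fun _ => (0:ℂ)) ∈ M)
    (hMadd : ∀ f ∈ M, ∀ g ∈ M, f + g ∈ M)
    (hMsmul : ∀ (c : ℂ), ∀ f ∈ M, c • f ∈ M)
    (hMclosed : ∀ (F : ℕ → ℂ → ℂ) (g : ℂ → ℂ), (∀ n, F n ∈ M) → MemBergman p α g →
      Filter.Tendsto (fun n => bergmanNorm p α (F n - g)) Filter.atTop (nhds 0) → g ∈ M)
    (hMinv : ∀ f ∈ M, (fun z => z * f z) ∈ M) :
    ¬ ∃ φ : ℂ → ℂ, IsInner φ ∧ ∀ g : ℂ → ℂ, g ∈ M ↔ MemMulHardy p φ g := by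
  rintro ⟨φ, hφ, hM⟩
  have hφ' := hφ
  obtain ⟨hφd, ⟨C, hC⟩, -⟩ := hφ'
  have hp0 : 0 < p := by linarith
  have hC0 : 0 ≤ C := (norm_nonneg _).trans (hC 0 (by simp [mem_unitDisk]))
  have hmeas : MeasurableSet unitDisk := Metric.isOpen_ball.measurableSet
  set F : ℕ → ℂ → ℂ := fun n z => φ z * kern p (1 / ((n : ℝ) + 1)) z with hF
  set g : ℂ → ℂ := fun z => φ z * kern p 0 z with hg
  have hgd : DifferentiableOn ℂ g unitDisk := hφd.mul (differentiableOn_kern p le_rfl)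
  have hFd (n : ℕ) : DifferentiableOn ℂ (F n) unitDisk :=
    hφd.mul (differentiableOn_kern p (by positivity))
  have hFM (n : ℕ) : F n ∈ M :=
    (hM _).2 ⟨_, memHardy_kern hp (by positivity), fun z _ => rfl⟩
  -- a common majorant for the Bergman integrands of `g` and of all `F n - g`
  have hbound (f : ℂ → ℂ) (z : ℂ) (hz : z ∈ unitDisk)
      (hf : ‖f z‖ ≤ C * (2 * ‖kern p 0 z‖)) :
      ‖bergmanIntegrand p α f z‖ ≤
        (C * 2) ^ p * (‖1 - z‖⁻¹ * (1 - ‖z‖ ^ 2) ^ α) := by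
    have hw : 0 ≤ (1 - ‖z‖ ^ 2) ^ α := by
      rw [mem_unitDisk] at hz
      exact Real.rpow_nonneg (by nlinarith [norm_nonneg z]) _
    unfold bergmanIntegrand
    rw [Real.norm_of_nonneg (by positivity), ← mul_assoc]
    gcongr
    have e : ‖1 - z‖⁻¹ = ‖kern p 0 z‖ ^ p := by rw [norm_kern_rpow hp]; simp
    rw [e, ← Real.mul_rpow (by positivity) (by positivity)]
    gcongr
    linarith
  have hBint := (integrableOn_inv_mul_weight hα).const_mul ((C * 2) ^ p)
  have hgB : MemBergman p α g := by
    refine ⟨hgd, hBint.mono' (aestronglyMeasurable_bergmanIntegrand hp hgd) ?_⟩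
    refine (ae_restrict_iff' hmeas).2 (Eventually.of_forall fun z hz => hbound g z hz ?_)
    simp only [hg, norm_mul]
    gcongr
    · exact hC z hz
    · linarith [norm_nonneg (kern p 0 z)]
  have hlim : Tendsto (fun n => ∫ z in unitDisk, bergmanIntegrand p α (F n - g) z) atTop
      (𝓝 (∫ _ in unitDisk, (0:ℝ))) := by
    refine tendsto_integral_of_dominated_convergence _
      (fun n => aestronglyMeasurable_bergmanIntegrand hp ((hFd n).sub hgd)) hBint ?_ ?_
    · intro n
      refine (ae_restrict_iff' hmeas).2 (Eventually.of_forall fun z hz => hbound _ z hz ?_)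
      simp only [hF, hg, Pi.sub_apply, ← mul_sub, norm_mul]
      gcongr
      · exact hC z hz
      · have h1 := norm_kern_le hp (ε := 1 / ((n : ℝ) + 1)) (by positivity) hz
        have h2 := norm_sub_le (kern p (1 / ((n : ℝ) + 1)) z) (kern p 0 z)
        linarith
    · refine (ae_restrict_iff' hmeas).2 (Eventually.of_forall fun z hz => ?_)
      have h1 : Tendsto (fun n => ‖(F n - g) z‖) atTop (𝓝 0) := by
        have := (((tendsto_kern p hz).sub_const (kern p 0 z)).const_mul (φ z)).norm
        simpa [hF, hg, mul_sub] using this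
      have h2 := (h1.rpow_const (p := p) (Or.inr hp0.le)).mul_const ((1 - ‖z‖ ^ 2) ^ α)
      simpa [bergmanIntegrand, Real.zero_rpow hp0.ne'] using h2
  have hnorm : Tendsto (fun n => bergmanNorm p α (F n - g)) atTop (𝓝 0) := by
    have := (hlim.const_mul ((α + 1) / π)).rpow_const (p := 1 / p) (Or.inr (by positivity))
    have e : (0:ℝ) ^ p⁻¹ = 0 := Real.zero_rpow (by positivity)
    simpa [bergmanNorm, e] using this
  obtain ⟨h, hh, heq⟩ := (hM g).1 (hMclosed F g hFM hgB hnorm)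
  have hk : EqOn h (kern p 0) unitDisk :=
    eqOn_of_mul_eqOn hφd hh.1 (differentiableOn_kern p le_rfl) hφ.exists_ne_zero heq.symm
  exact not_memHardy_kern_zero hp (memHardy_congr hk hh)
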